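/- Let φ(x) be a formula of the correspondence language, let k = r(φ(x)) be its degree, and suppose φ(x) is invariant with respect to (2,2)-modal k-asimulations. Then φ(x) is logically equivalent to the (2,2)-standard x-translation of some modal intuitionistic formula. -/

import Mathlib

namespace ModalIntAsim

/-- Binary relation symbols of the correspondence vocabulary: R, R_□, R_◇. -/
inductive RelSym : Type
  | r | box | diam
deriving DecidableEq

/-- Formulas of the correspondence language: classical first-order logic without
identity, with variables indexed by `ℕ`, unary predicate letters `P n` (n : ℕ),
and the three binary relation symbols. -/
inductive FOForm : Type
  | falsum : FOForm
  | pred : ℕ → ℕ → FOForm            -- `pred n v` is `P_n(x_v)`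
  | rel : RelSym → ℕ → ℕ → FOForm    -- `rel s v w` is `S(x_v, x_w)`
  | conj : FOForm → FOForm → FOForm
  | disj : FOForm → FOForm → FOForm
  | impl : FOForm → FOForm → FOForm
  | all : ℕ → FOForm → FOForm
  | ex : ℕ → FOForm → FOForm

namespace FOForm

/-- Free variables of a correspondence formula. -/
def freeVars : FOForm → Finset ℕ
  | falsum => ∅
  | pred _ v => {v}
  | rel _ v w => {v, w}
  | conj f g => f.freeVars ∪ g.freeVars
  | disj f g => f.freeVars ∪ g.freeVars
  | impl f g => f.freeVars ∪ g.freeVars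
  | all v f => f.freeVars \ {v}
  | ex v f => f.freeVars \ {v}

/-- The unary predicate letters occurring in a formula (the binary relation
symbols R, R_□, R_◇ are regarded as belonging to every vocabulary Σ_φ). -/
def predLetters : FOForm → Finset ℕ
  | falsum => ∅
  | pred n _ => {n}
  | rel _ _ _ => ∅
  | conj f g => f.predLetters ∪ g.predLetters
  | disj f g => f.predLetters ∪ g.predLetters
  | impl f g => f.predLetters ∪ g.predLetters
  | all _ f => f.predLetters
  | ex _ f => f.predLetters

/-- Degree of a formula: the greatest number of nested quantifiers. -/
def degree : FOForm → ℕ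
  | falsum => 0
  | pred _ _ => 0
  | rel _ _ _ => 0
  | conj f g => max f.degree g.degree
  | disj f g => max f.degree g.degree
  | impl f g => max f.degree g.degree
  | all _ f => f.degree + 1
  | ex _ f => f.degree + 1

end FOForm

/-- A model of the correspondence language: a domain together with
interpretations of R, R_□, R_◇ and of the unary predicate letters.
(A Θ-model only consults the letters in Θ.) -/
structure Model : Type 1 where
  U : Type
  rel : U → U → Prop
  relBox : U → U → Prop
  relDiam : U → U → Prop
  pred : ℕ → U → Prop

/-- Interpretation of a binary relation symbol in a model. -/
def Model.relOf (M : Model) : RelSym → M.U → M.U → Prop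
  | .r => M.rel
  | .box => M.relBox
  | .diam => M.relDiam

/-- Tarskian satisfaction of a formula in a model under an assignment. -/
def Sat (M : Model) : FOForm → (ℕ → M.U) → Prop
  | .falsum, _ => False
  | .pred n v, α => M.pred n (α v)
  | .rel s v w, α => M.relOf s (α v) (α w)
  | .conj f g, α => Sat M f α ∧ Sat M g α
  | .disj f g, α => Sat M f α ∨ Sat M g α
  | .impl f g, α => Sat M f α → Sat M g α
  | .all v f, α => ∀ u : M.U, Sat M f (Function.update α v u)
  | .ex v f, α => ∃ u : M.U, Sat M f (Function.update α v u)

/-- `M, a ⊨ φ(x)`: φ is true in `M` under any assignment sending `x` to `a`. -/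
def SatAt (M : Model) (a : M.U) (x : ℕ) (φ : FOForm) : Prop :=
  ∀ α : ℕ → M.U, α x = a → Sat M φ α

/-- Logical equivalence of correspondence formulas. -/
def Equiv (φ ψ : FOForm) : Prop :=
  ∀ (M : Model) (α : ℕ → M.U), Sat M φ α ↔ Sat M ψ α

/-- Logical entailment between correspondence formulas. -/
def Entails (φ ψ : FOForm) : Prop :=
  ∀ (M : Model) (α : ℕ → M.U), Sat M φ α → Sat M ψ α

/-- Modal intuitionistic formulas: built from propositional letters `p n`
using ⊥, ∧, ∨, →, □, ◇. -/
inductive MForm : Type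
  | bot : MForm
  | prop : ℕ → MForm
  | conj : MForm → MForm → MForm
  | disj : MForm → MForm → MForm
  | impl : MForm → MForm → MForm
  | box : MForm → MForm
  | diam : MForm → MForm

/-- The (i,j)-standard x-translation `ST_ij`.  `boxOne = true` means the box
clause (□₁) is used (i = 1), `boxOne = false` means (□₂) (i = 2); likewise
`diamOne = true` means the diamond clause (◇₁) (j = 1) and `diamOne = false`
means (◇₂) (j = 2).  Bound variables are chosen fresh as `x+1`, `x+2`. -/
def ST (boxOne diamOne : Bool) : MForm → ℕ → FOForm
  | .bot, _ => .falsum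
  | .prop n, x => .pred n x
  | .conj I J, x => .conj (ST boxOne diamOne I x) (ST boxOne diamOne J x)
  | .disj I J, x => .disj (ST boxOne diamOne I x) (ST boxOne diamOne J x)
  | .impl I J, x =>
      .all (x + 1) (.impl (.rel .r x (x + 1))
        (.impl (ST boxOne diamOne I (x + 1)) (ST boxOne diamOne J (x + 1))))
  | .box I, x =>
      if boxOne then
        .all (x + 1) (.impl (.rel .box x (x + 1)) (ST boxOne diamOne I (x + 1)))
      else
        .all (x + 1) (.impl (.rel .r x (x + 1))
          (.all (x + 2) (.impl (.rel .box (x + 1) (x + 2)) (ST boxOne diamOne I (x + 2)))))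
  | .diam I, x =>
      if diamOne then
        .ex (x + 1) (.conj (.rel .diam x (x + 1)) (ST boxOne diamOne I (x + 1)))
      else
        .all (x + 1) (.impl (.rel .r x (x + 1))
          (.ex (x + 2) (.conj (.rel .diam (x + 1) (x + 2)) (ST boxOne diamOne I (x + 2)))))

/-! ### Conditions on relations between tuples (the k-asimulation conditions).
A relation between the two models is represented by its two directed
components; `N` is the model of the source tuple and `P` that of the target
tuple.  A tuple `(ā_m, a)` is represented as the list `as ++ [a]`, with
`m = as.length`. -/

section TupleConds

variable (N P : Model)

/-- The "p-type" condition: related tuples are nonempty and of equal length. -/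
def TypeCond (A : List N.U → List P.U → Prop) : Prop :=
  ∀ as bs, A as bs → as ≠ [] ∧ as.length = bs.length

/-- (p-base). -/
def BaseCond (Θ : Set ℕ) (A : List N.U → List P.U → Prop) : Prop :=
  ∀ (as : List N.U) (bs : List P.U) (a : N.U) (b : P.U),
    A (as ++ [a]) (bs ++ [b]) → ∀ n ∈ Θ, N.pred n a → P.pred n b

/-- (p-step). -/
def StepCond (k : ℕ) (A : List N.U → List P.U → Prop)
    (Arev : List P.U → List N.U → Prop) : Prop :=
  ∀ (as : List N.U) (bs : List P.U) (a : N.U) (b d : P.U),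
    A (as ++ [a]) (bs ++ [b]) → P.rel b d → as.length < k →
    ∃ c : N.U, N.rel a c ∧ A (as ++ [a, c]) (bs ++ [b, d]) ∧
      Arev (bs ++ [b, d]) (as ++ [a, c])

/-- (p-box-1). -/
def Box1Cond (k : ℕ) (A : List N.U → List P.U → Prop) : Prop :=
  ∀ (as : List N.U) (bs : List P.U) (a : N.U) (b d : P.U),
    A (as ++ [a]) (bs ++ [b]) → P.relBox b d → as.length < k →
    ∃ c : N.U, N.relBox a c ∧ A (as ++ [a, c]) (bs ++ [b, d])

/-- (p-box-2). -/
def Box2Cond (k : ℕ) (A : List N.U → List P.U → Prop) : Prop :=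
  ∀ (as : List N.U) (bs : List P.U) (a : N.U) (b d f : P.U),
    A (as ++ [a]) (bs ++ [b]) → P.rel b d → P.relBox d f → as.length + 1 < k →
    ∃ c e : N.U, N.rel a c ∧ N.relBox c e ∧ A (as ++ [a, c, e]) (bs ++ [b, d, f])

/-- (p-diam-1). -/
def Diam1Cond (k : ℕ) (A : List N.U → List P.U → Prop) : Prop :=
  ∀ (as : List N.U) (bs : List P.U) (a c : N.U) (b : P.U),
    A (as ++ [a]) (bs ++ [b]) → N.relDiam a c → as.length < k →
    ∃ d : P.U, P.relDiam b d ∧ A (as ++ [a, c]) (bs ++ [b, d])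

/-- (p-diam-2(1)). -/
def Diam2aCond (k : ℕ) (A B : List N.U → List P.U → Prop) : Prop :=
  ∀ (as : List N.U) (bs : List P.U) (a : N.U) (b d : P.U),
    A (as ++ [a]) (bs ++ [b]) → P.rel b d → as.length + 1 < k →
    ∃ c : N.U, N.rel a c ∧ B (as ++ [a, c]) (bs ++ [b, d])

/-- (p-diam-2(2)). -/
def Diam2bCond (k : ℕ) (B A : List N.U → List P.U → Prop) : Prop :=
  ∀ (as : List N.U) (bs : List P.U) (a c : N.U) (b : P.U),
    B (as ++ [a]) (bs ++ [b]) → N.relDiam a c → as.length < k →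
    ∃ d : P.U, P.relDiam b d ∧ A (as ++ [a, c]) (bs ++ [b, d])

end TupleConds

/-- An (i,1)-modal ⟨(M₁,t),(M₂,u)⟩_k-asimulation (j = 1): a single relation `A`
given by its two directed components `A12`, `A21`. -/
def IsKAsimD1 (boxOne : Bool) (Θ : Set ℕ) (M₁ M₂ : Model) (t : M₁.U) (u : M₂.U) (k : ℕ)
    (A12 : List M₁.U → List M₂.U → Prop) (A21 : List M₂.U → List M₁.U → Prop) : Prop :=
  TypeCond M₁ M₂ A12 ∧ TypeCond M₂ M₁ A21 ∧
  A12 [t] [u] ∧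
  BaseCond M₁ M₂ Θ A12 ∧ BaseCond M₂ M₁ Θ A21 ∧
  StepCond M₁ M₂ k A12 A21 ∧ StepCond M₂ M₁ k A21 A12 ∧
  (if boxOne then Box1Cond M₁ M₂ k A12 ∧ Box1Cond M₂ M₁ k A21
   else Box2Cond M₁ M₂ k A12 ∧ Box2Cond M₂ M₁ k A21) ∧
  Diam1Cond M₁ M₂ k A12 ∧ Diam1Cond M₂ M₁ k A21

/-- An (i,2)-modal ⟨(M₁,t),(M₂,u)⟩_k-asimulation (j = 2): an ordered pair
(A, B) of relations, each given by its two directed components. -/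
def IsKAsimD2 (boxOne : Bool) (Θ : Set ℕ) (M₁ M₂ : Model) (t : M₁.U) (u : M₂.U) (k : ℕ)
    (A12 : List M₁.U → List M₂.U → Prop) (A21 : List M₂.U → List M₁.U → Prop)
    (B12 : List M₁.U → List M₂.U → Prop) (B21 : List M₂.U → List M₁.U → Prop) : Prop :=
  TypeCond M₁ M₂ A12 ∧ TypeCond M₂ M₁ A21 ∧
  TypeCond M₁ M₂ B12 ∧ TypeCond M₂ M₁ B21 ∧
  A12 [t] [u] ∧
  BaseCond M₁ M₂ Θ A12 ∧ BaseCond M₂ M₁ Θ A21 ∧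
  StepCond M₁ M₂ k A12 A21 ∧ StepCond M₂ M₁ k A21 A12 ∧
  (if boxOne then Box1Cond M₁ M₂ k A12 ∧ Box1Cond M₂ M₁ k A21
   else Box2Cond M₁ M₂ k A12 ∧ Box2Cond M₂ M₁ k A21) ∧
  Diam2aCond M₁ M₂ k A12 B12 ∧ Diam2aCond M₂ M₁ k A21 B21 ∧
  Diam2bCond M₁ M₂ k B12 A12 ∧ Diam2bCond M₂ M₁ k B21 A21

/-- φ(x) is invariant with respect to (i,1)-modal k-asimulations. -/
def KInvariantD1 (boxOne : Bool) (x : ℕ) (φ : FOForm) (k : ℕ) : Prop :=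
  ∀ Θ : Set ℕ, (φ.predLetters : Set ℕ) ⊆ Θ →
  ∀ (M₁ M₂ : Model) (t : M₁.U) (u : M₂.U)
    (A12 : List M₁.U → List M₂.U → Prop) (A21 : List M₂.U → List M₁.U → Prop),
    IsKAsimD1 boxOne Θ M₁ M₂ t u k A12 A21 →
    ∀ (a : M₁.U) (b : M₂.U), A12 [a] [b] → SatAt M₁ a x φ → SatAt M₂ b x φ

/-- φ(x) is invariant with respect to (i,2)-modal k-asimulations. -/
def KInvariantD2 (boxOne : Bool) (x : ℕ) (φ : FOForm) (k : ℕ) : Prop :=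
  ∀ Θ : Set ℕ, (φ.predLetters : Set ℕ) ⊆ Θ →
  ∀ (M₁ M₂ : Model) (t : M₁.U) (u : M₂.U)
    (A12 : List M₁.U → List M₂.U → Prop) (A21 : List M₂.U → List M₁.U → Prop)
    (B12 : List M₁.U → List M₂.U → Prop) (B21 : List M₂.U → List M₁.U → Prop),
    IsKAsimD2 boxOne Θ M₁ M₂ t u k A12 A21 B12 B21 →
    ∀ (a : M₁.U) (b : M₂.U), A12 [a] [b] → SatAt M₁ a x φ → SatAt M₂ b x φ

/-! ### Conditions for asimulations *simpliciter* (relations between elements). -/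

section ElemConds

variable (N P : Model)

/-- (base). -/
def BaseCondE (Θ : Set ℕ) (A : N.U → P.U → Prop) : Prop :=
  ∀ (a : N.U) (b : P.U), A a b → ∀ n ∈ Θ, N.pred n a → P.pred n b

/-- (step). -/
def StepCondE (A : N.U → P.U → Prop) (Arev : P.U → N.U → Prop) : Prop :=
  ∀ (a : N.U) (b d : P.U), A a b → P.rel b d →
    ∃ c : N.U, N.rel a c ∧ A c d ∧ Arev d c

/-- (box-1). -/
def Box1CondE (A : N.U → P.U → Prop) : Prop :=
  ∀ (a : N.U) (b d : P.U), A a b → P.relBox b d →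
    ∃ c : N.U, N.relBox a c ∧ A c d

/-- (box-2). -/
def Box2CondE (A : N.U → P.U → Prop) : Prop :=
  ∀ (a : N.U) (b d f : P.U), A a b → P.rel b d → P.relBox d f →
    ∃ c e : N.U, N.rel a c ∧ N.relBox c e ∧ A e f

/-- (diam-1). -/
def Diam1CondE (A : N.U → P.U → Prop) : Prop :=
  ∀ (a c : N.U) (b : P.U), A a b → N.relDiam a c →
    ∃ d : P.U, P.relDiam b d ∧ A c d

/-- (diam-2(1)). -/
def Diam2aCondE (A B : N.U → P.U → Prop) : Prop :=
  ∀ (a : N.U) (b d : P.U), A a b → P.rel b d →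
    ∃ c : N.U, N.rel a c ∧ B c d

/-- (diam-2(2)). -/
def Diam2bCondE (B A : N.U → P.U → Prop) : Prop :=
  ∀ (a c : N.U) (b : P.U), B a b → N.relDiam a c →
    ∃ d : P.U, P.relDiam b d ∧ A c d

end ElemConds

/-- An (i,1)-modal ⟨(M₁,t),(M₂,u)⟩-asimulation (j = 1). -/
def IsAsimD1 (boxOne : Bool) (Θ : Set ℕ) (M₁ M₂ : Model) (t : M₁.U) (u : M₂.U)
    (A12 : M₁.U → M₂.U → Prop) (A21 : M₂.U → M₁.U → Prop) : Prop :=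
  A12 t u ∧
  BaseCondE M₁ M₂ Θ A12 ∧ BaseCondE M₂ M₁ Θ A21 ∧
  StepCondE M₁ M₂ A12 A21 ∧ StepCondE M₂ M₁ A21 A12 ∧
  (if boxOne then Box1CondE M₁ M₂ A12 ∧ Box1CondE M₂ M₁ A21
   else Box2CondE M₁ M₂ A12 ∧ Box2CondE M₂ M₁ A21) ∧
  Diam1CondE M₁ M₂ A12 ∧ Diam1CondE M₂ M₁ A21

/-- An (i,2)-modal ⟨(M₁,t),(M₂,u)⟩-asimulation (j = 2). -/
def IsAsimD2 (boxOne : Bool) (Θ : Set ℕ) (M₁ M₂ : Model) (t : M₁.U) (u : M₂.U)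
    (A12 : M₁.U → M₂.U → Prop) (A21 : M₂.U → M₁.U → Prop)
    (B12 : M₁.U → M₂.U → Prop) (B21 : M₂.U → M₁.U → Prop) : Prop :=
  A12 t u ∧
  BaseCondE M₁ M₂ Θ A12 ∧ BaseCondE M₂ M₁ Θ A21 ∧
  StepCondE M₁ M₂ A12 A21 ∧ StepCondE M₂ M₁ A21 A12 ∧
  (if boxOne then Box1CondE M₁ M₂ A12 ∧ Box1CondE M₂ M₁ A21
   else Box2CondE M₁ M₂ A12 ∧ Box2CondE M₂ M₁ A21) ∧
  Diam2aCondE M₁ M₂ A12 B12 ∧ Diam2aCondE M₂ M₁ A21 B21 ∧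
  Diam2bCondE M₁ M₂ B12 A12 ∧ Diam2bCondE M₂ M₁ B21 A21

/-- φ(x) is invariant with respect to (i,1)-modal asimulations. -/
def InvariantD1 (boxOne : Bool) (x : ℕ) (φ : FOForm) : Prop :=
  ∀ Θ : Set ℕ, (φ.predLetters : Set ℕ) ⊆ Θ →
  ∀ (M₁ M₂ : Model) (t : M₁.U) (u : M₂.U)
    (A12 : M₁.U → M₂.U → Prop) (A21 : M₂.U → M₁.U → Prop),
    IsAsimD1 boxOne Θ M₁ M₂ t u A12 A21 →
    ∀ (a : M₁.U) (b : M₂.U), A12 a b → SatAt M₁ a x φ → SatAt M₂ b x φ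

/-- φ(x) is invariant with respect to (i,2)-modal asimulations. -/
def InvariantD2 (boxOne : Bool) (x : ℕ) (φ : FOForm) : Prop :=
  ∀ Θ : Set ℕ, (φ.predLetters : Set ℕ) ⊆ Θ →
  ∀ (M₁ M₂ : Model) (t : M₁.U) (u : M₂.U)
    (A12 : M₁.U → M₂.U → Prop) (A21 : M₂.U → M₁.U → Prop)
    (B12 : M₁.U → M₂.U → Prop) (B21 : M₂.U → M₁.U → Prop),
    IsAsimD2 boxOne Θ M₁ M₂ t u A12 A21 B12 B21 →
    ∀ (a : M₁.U) (b : M₂.U), A12 a b → SatAt M₁ a x φ → SatAt M₂ b x φ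

/-! ### Types, complete conjunctions, ω-saturation. -/

/-- `int(φ,x,l)`: the set of (2,2)-standard x-translations of modal
intuitionistic formulas which are (Σ_φ,x,l)-formulas. -/
def intSet (φ : FOForm) (x l : ℕ) : Set FOForm :=
  {ψ | (∃ I : MForm, ψ = ST false false I x) ∧
    ψ.predLetters ⊆ φ.predLetters ∧ ψ.freeVars ⊆ {x} ∧ ψ.degree ≤ l}

/-- `tp_l(φ(x),M,a)`. -/
def tpSet (φ : FOForm) (x l : ℕ) (M : Model) (a : M.U) : Set FOForm :=
  {ψ | ψ ∈ intSet φ x l ∧ SatAt M a x ψ}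

/-- Conjunction of a nonempty list of formulas. -/
def listConj : FOForm → List FOForm → FOForm
  | ψ, [] => ψ
  | ψ, χ :: L => FOForm.conj ψ (listConj χ L)

/-- Ψ(x) is a complete (φ,x,k)-conjunction. -/
def IsCompleteConj (φ : FOForm) (x k : ℕ) (Ψ : FOForm) : Prop :=
  (∃ (ψ₀ : FOForm) (L : List FOForm), ψ₀ ∈ intSet φ x k ∧
    (∀ χ ∈ L, χ ∈ intSet φ x k) ∧ Ψ = listConj ψ₀ L) ∧
  ∃ (M : Model) (a : M.U), SatAt M a x (FOForm.conj Ψ φ) ∧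
    ∀ ψ ∈ tpSet φ x k M a, Entails Ψ ψ

/-- `int_x(Θ)` for the (i,j)-standard translation. -/
def intX (Θ : Set ℕ) (boxOne diamOne : Bool) (x : ℕ) : Set FOForm :=
  {ψ | (∃ I : MForm, ψ = ST boxOne diamOne I x) ∧ (ψ.predLetters : Set ℕ) ⊆ Θ}

/-- `tp_x(M,t)` for the (i,j)-standard translation. -/
def tpX (Θ : Set ℕ) (boxOne diamOne : Bool) (x : ℕ) (M : Model) (t : M.U) : Set FOForm :=
  {ψ | ψ ∈ intX Θ boxOne diamOne x ∧ SatAt M t x ψ}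

/-- `imp_x(M,t) = ⋂ { t̄p_x(M,u) : t R_◇ u }` (for the (2,2)-translation). -/
def impX (Θ : Set ℕ) (x : ℕ) (M : Model) (t : M.U) : Set FOForm :=
  {ψ | ψ ∈ intX Θ false false x ∧ ∀ u : M.U, M.relDiam t u → ¬ SatAt M u x ψ}

/-- ω-saturation: for every finite tuple of parameters (the first `n` values of
an assignment `α`) and every set `Γ` of formulas with finitely many free
variables beyond the parameters, if `Γ` is consistent with the first-order
theory of `[M,ā]` (i.e. satisfiable together with it in some model), then `Γ`
is realized in `[M,ā]`. -/
def OmegaSaturated (M : Model) : Prop :=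
  ∀ (n : ℕ) (α : ℕ → M.U) (Γ : Set FOForm),
    (∃ k : ℕ, ∀ γ ∈ Γ, γ.freeVars ⊆ Finset.range (n + k)) →
    (∃ (N : Model) (β : ℕ → N.U),
      (∀ ψ : FOForm, ψ.freeVars ⊆ Finset.range n → Sat M ψ α → Sat N ψ β) ∧
      ∀ γ ∈ Γ, Sat N γ β) →
    ∃ α' : ℕ → M.U, (∀ i < n, α' i = α i) ∧ ∀ γ ∈ Γ, Sat M γ α'

/-! ### Relativization to a class κ of models. -/

/-- κ(Θ) is first-order axiomatizable for every finite Θ (with R ∈ Θ): for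
every finite set `S` of unary predicate letters there is a set of Θ-sentences
axiomatizing membership in κ. -/
def FinAxiomatizable (κ : Set Model) : Prop :=
  ∀ S : Finset ℕ, ∃ Ax : Set FOForm,
    (∀ ψ ∈ Ax, ψ.freeVars = ∅ ∧ (ψ.predLetters : Set ℕ) ⊆ (S : Set ℕ)) ∧
    ∀ M : Model, M ∈ κ ↔ ∀ ψ ∈ Ax, ∀ α : ℕ → M.U, Sat M ψ α

/-- φ κ-follows from ψ: {ψ, ¬φ} is not κ-satisfiable. -/
def KappaFollows (κ : Set Model) (ψ φ : FOForm) : Prop :=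
  ¬ ∃ M : Model, M ∈ κ ∧ ∃ α : ℕ → M.U, Sat M ψ α ∧ ¬ Sat M φ α

/-- κ-equivalence of formulas. -/
def KappaEquiv (κ : Set Model) (φ ψ : FOForm) : Prop :=
  KappaFollows κ φ ψ ∧ KappaFollows κ ψ φ

/-- φ(x) is κ-invariant with respect to (i,1)-modal asimulations. -/
def KappaInvariantD1 (κ : Set Model) (boxOne : Bool) (x : ℕ) (φ : FOForm) : Prop :=
  ∀ Θ : Set ℕ, (φ.predLetters : Set ℕ) ⊆ Θ →
  ∀ (M₁ M₂ : Model), M₁ ∈ κ → M₂ ∈ κ →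
  ∀ (t : M₁.U) (u : M₂.U)
    (A12 : M₁.U → M₂.U → Prop) (A21 : M₂.U → M₁.U → Prop),
    IsAsimD1 boxOne Θ M₁ M₂ t u A12 A21 →
    ∀ (a : M₁.U) (b : M₂.U), A12 a b → SatAt M₁ a x φ → SatAt M₂ b x φ

/-- φ(x) is κ-invariant with respect to (i,2)-modal asimulations. -/
def KappaInvariantD2 (κ : Set Model) (boxOne : Bool) (x : ℕ) (φ : FOForm) : Prop :=
  ∀ Θ : Set ℕ, (φ.predLetters : Set ℕ) ⊆ Θ →
  ∀ (M₁ M₂ : Model), M₁ ∈ κ → M₂ ∈ κ →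
  ∀ (t : M₁.U) (u : M₂.U)
    (A12 : M₁.U → M₂.U → Prop) (A21 : M₂.U → M₁.U → Prop)
    (B12 : M₁.U → M₂.U → Prop) (B21 : M₂.U → M₁.U → Prop),
    IsAsimD2 boxOne Θ M₁ M₂ t u A12 A21 B12 B21 →
    ∀ (a : M₁.U) (b : M₂.U), A12 a b → SatAt M₁ a x φ → SatAt M₂ b x φ

/-- φ(x) is κ-invariant with respect to (i,j)-modal asimulations
(`diamOne = true` means j = 1). -/
def KappaInvariant (κ : Set Model) (boxOne diamOne : Bool) (x : ℕ) (φ : FOForm) : Prop :=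
  if diamOne then KappaInvariantD1 κ boxOne x φ else KappaInvariantD2 κ boxOne x φ


/-! ### Proof of the key lemma.  We work with sets of pointed models. -/

/-- Pointed models. -/
abbrev PMod : Type 1 := (M : Model) × M.U

/-- Semantic implication. -/
def sImp (X Y : Set PMod) : Set PMod :=
  {p | ∀ y : p.1.U, p.1.rel p.2 y → (⟨p.1, y⟩ : PMod) ∈ X → (⟨p.1, y⟩ : PMod) ∈ Y}

/-- Semantic box. -/
def sBox (X : Set PMod) : Set PMod :=
  {p | ∀ y : p.1.U, p.1.rel p.2 y → ∀ z : p.1.U, p.1.relBox y z → (⟨p.1, z⟩ : PMod) ∈ X}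

/-- Semantic diamond. -/
def sDiam (X : Set PMod) : Set PMod :=
  {p | ∀ y : p.1.U, p.1.rel p.2 y → ∃ z : p.1.U, p.1.relDiam y z ∧ (⟨p.1, z⟩ : PMod) ∈ X}

/-- Semantic propositional letter. -/
def sProp (n : ℕ) : Set PMod := {p | p.1.pred n p.2}

/-- Properties definable with modal depth at most `l` and letters in `S`. -/
def DS (S : Finset ℕ) : ℕ → Set (Set PMod)
  | 0 => latticeClosure ({∅, Set.univ} ∪ sProp '' (S : Set ℕ))
  | l + 1 => latticeClosure
      (DS S l ∪ (Set.image2 sImp (DS S l) (DS S l) ∪ (sBox '' DS S l ∪ sDiam '' DS S l)))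

theorem DS_finite (S : Finset ℕ) (l : ℕ) : (DS S l).Finite := by
  induction l with
  | zero =>
    exact Set.Finite.latticeClosure ((Set.toFinite _).union (S.finite_toSet.image _))
  | succ l ih =>
    exact Set.Finite.latticeClosure
      (ih.union ((ih.image2 _ ih).union ((ih.image _).union (ih.image _))))

theorem DS_lattice (S : Finset ℕ) (l : ℕ) : IsSublattice (DS S l) := by
  cases l <;> exact isSublattice_latticeClosure

theorem DS_succ (S : Finset ℕ) (l : ℕ) : DS S l ⊆ DS S (l + 1) := fun _ hX =>
  subset_latticeClosure (Or.inl hX)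

theorem DS_mono (S : Finset ℕ) : Monotone (DS S) := monotone_nat_of_le_succ (DS_succ S)

theorem DS_empty (S : Finset ℕ) (l : ℕ) : ∅ ∈ DS S l :=
  DS_mono S (Nat.zero_le l) (subset_latticeClosure (by simp))

theorem DS_univ (S : Finset ℕ) (l : ℕ) : Set.univ ∈ DS S l :=
  DS_mono S (Nat.zero_le l) (subset_latticeClosure (by simp))

theorem DS_prop (S : Finset ℕ) (l n : ℕ) (hn : n ∈ S) : sProp n ∈ DS S l :=
  DS_mono S (Nat.zero_le l) (subset_latticeClosure (Or.inr ⟨n, hn, rfl⟩))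

theorem DS_imp (S : Finset ℕ) (l : ℕ) {X Y : Set PMod} (hX : X ∈ DS S l) (hY : Y ∈ DS S l) :
    sImp X Y ∈ DS S (l + 1) :=
  subset_latticeClosure (Or.inr (Or.inl ⟨X, hX, Y, hY, rfl⟩))

theorem DS_box (S : Finset ℕ) (l : ℕ) {X : Set PMod} (hX : X ∈ DS S l) :
    sBox X ∈ DS S (l + 1) :=
  subset_latticeClosure (Or.inr (Or.inr (Or.inl ⟨X, hX, rfl⟩)))

theorem DS_diam (S : Finset ℕ) (l : ℕ) {X : Set PMod} (hX : X ∈ DS S l) :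
    sDiam X ∈ DS S (l + 1) :=
  subset_latticeClosure (Or.inr (Or.inr (Or.inr ⟨X, hX, rfl⟩)))

theorem DS_sUnion (S : Finset ℕ) (l : ℕ) {T : Set (Set PMod)} (hT : T ⊆ DS S l) :
    ⋃₀ T ∈ DS S l :=
  (DS_lattice S l).supClosed.sSup_mem ((DS_finite S l).subset hT) (DS_empty S l) hT

theorem DS_sInter (S : Finset ℕ) (l : ℕ) {T : Set (Set PMod)} (hT : T ⊆ DS S l) :
    ⋂₀ T ∈ DS S l :=
  (DS_lattice S l).infClosed.sInf_mem ((DS_finite S l).subset hT) (DS_univ S l) hT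

/-- The property `X` is expressed by a modal formula. -/
def Expressible (X : Set PMod) : Prop :=
  ∃ I : MForm, ∀ (x : ℕ) (M : Model) (α : ℕ → M.U),
    Sat M (ST false false I x) α ↔ (⟨M, α x⟩ : PMod) ∈ X

theorem expr_lattice : IsSublattice {X | Expressible X} := by
  constructor
  · rintro X ⟨I, hI⟩ Y ⟨J, hJ⟩
    exact ⟨.disj I J, fun x M α => or_congr (hI x M α) (hJ x M α)⟩
  · rintro X ⟨I, hI⟩ Y ⟨J, hJ⟩
    exact ⟨.conj I J, fun x M α => and_congr (hI x M α) (hJ x M α)⟩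

theorem expr_imp {X Y : Set PMod} (hX : Expressible X) (hY : Expressible Y) : Expressible (sImp X Y) := by
  obtain ⟨I, hI⟩ := hX
  obtain ⟨J, hJ⟩ := hY
  refine ⟨.impl I J, fun x M α => ?_⟩
  simp [ST, Sat, hI, hJ, sImp, Model.relOf]

theorem expr_box {X : Set PMod} (hX : Expressible X) : Expressible (sBox X) := by
  obtain ⟨I, hI⟩ := hX
  refine ⟨.box I, fun x M α => ?_⟩
  simp [ST, Sat, hI, sBox, Model.relOf]

theorem expr_diam {X : Set PMod} (hX : Expressible X) : Expressible (sDiam X) := by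
  obtain ⟨I, hI⟩ := hX
  refine ⟨.diam I, fun x M α => ?_⟩
  simp [ST, Sat, hI, sDiam, Model.relOf]

theorem DS_expr (S : Finset ℕ) (l : ℕ) : DS S l ⊆ {X | Expressible X} := by
  induction l with
  | zero =>
    refine latticeClosure_min ?_ expr_lattice
    rintro X ((rfl | rfl) | ⟨n, -, rfl⟩)
    · exact ⟨.bot, fun x M α => by simp [ST, Sat]⟩
    · exact ⟨.impl .bot .bot, fun x M α => by simp [ST, Sat]⟩
    · exact ⟨.prop n, fun x M α => by simp [ST, Sat, sProp]⟩
  | succ l ih =>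
    refine latticeClosure_min ?_ expr_lattice
    rintro X (hX | ⟨Y, hY, Z, hZ, rfl⟩ | ⟨Y, hY, rfl⟩ | ⟨Y, hY, rfl⟩)
    · exact ih hX
    · exact expr_imp (ih hY) (ih hZ)
    · exact expr_box (ih hY)
    · exact expr_diam (ih hY)

/-- Preservation of all depth-`l` properties. -/
def Pres (S : Finset ℕ) (l : ℕ) (p q : PMod) : Prop := ∀ X ∈ DS S l, p ∈ X → q ∈ X

/-- Preservation along diamond successors. -/
def PresD (S : Finset ℕ) (l : ℕ) (p q : PMod) : Prop :=
  ∀ X ∈ DS S l, (∃ c, p.1.relDiam p.2 c ∧ (⟨p.1, c⟩ : PMod) ∈ X) →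
    ∃ d, q.1.relDiam q.2 d ∧ (⟨q.1, d⟩ : PMod) ∈ X

theorem pres_step {S : Finset ℕ} {l : ℕ} {N P : Model} {a : N.U} {b d : P.U}
    (h : Pres S (l + 1) ⟨N, a⟩ ⟨P, b⟩) (hd : P.rel b d) :
    ∃ c, N.rel a c ∧ Pres S l ⟨N, c⟩ ⟨P, d⟩ ∧ Pres S l ⟨P, d⟩ ⟨N, c⟩ := by
  by_contra hc
  have hF := h _ (DS_imp S l
    (DS_sInter S l (T := {X | X ∈ DS S l ∧ (⟨P, d⟩ : PMod) ∈ X}) fun X hX => hX.1)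
    (DS_sUnion S l (T := {X | X ∈ DS S l ∧ (⟨P, d⟩ : PMod) ∉ X}) fun X hX => hX.1)) (by
      intro y hy hyX
      by_contra hyn
      refine hc ⟨y, hy, ?_, ?_⟩
      · intro X hX hm
        by_contra hn
        exact hyn ⟨X, ⟨hX, hn⟩, hm⟩
      · intro X hX hm
        exact hyX X ⟨hX, hm⟩)
  obtain ⟨X, hX, hm⟩ := hF d hd (fun X hX => hX.2)
  exact hX.2 hm

theorem pres_box {S : Finset ℕ} {l : ℕ} {N P : Model} {a : N.U} {b d f : P.U}
    (h : Pres S (l + 1) ⟨N, a⟩ ⟨P, b⟩) (hd : P.rel b d) (hf : P.relBox d f) :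
    ∃ c e, N.rel a c ∧ N.relBox c e ∧ Pres S l ⟨N, e⟩ ⟨P, f⟩ := by
  by_contra hc
  have hF := h _ (DS_box S l
    (DS_sUnion S l (T := {X | X ∈ DS S l ∧ (⟨P, f⟩ : PMod) ∉ X}) fun X hX => hX.1)) (by
      intro y hy z hz
      by_contra hyn
      refine hc ⟨y, z, hy, hz, ?_⟩
      intro X hX hm
      by_contra hn
      exact hyn ⟨X, ⟨hX, hn⟩, hm⟩)
  obtain ⟨X, hX, hm⟩ := hF d hd f hf
  exact hX.2 hm

theorem pres_diamA {S : Finset ℕ} {l : ℕ} {N P : Model} {a : N.U} {b d : P.U}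
    (h : Pres S (l + 1) ⟨N, a⟩ ⟨P, b⟩) (hd : P.rel b d) :
    ∃ c, N.rel a c ∧ PresD S l ⟨N, c⟩ ⟨P, d⟩ := by
  by_contra hc
  have hF := h _ (DS_diam S l
    (DS_sUnion S l (T := {X | X ∈ DS S l ∧ ¬ ∃ e, P.relDiam d e ∧ (⟨P, e⟩ : PMod) ∈ X})
      fun X hX => hX.1)) (by
      intro y hy
      by_contra hyn
      refine hc ⟨y, hy, ?_⟩
      rintro X hX ⟨e, he, hm⟩
      by_contra hn
      exact hyn ⟨e, he, X, ⟨hX, hn⟩, hm⟩)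
  obtain ⟨e, he, X, hX, hm⟩ := hF d hd
  exact hX.2 ⟨e, he, hm⟩

theorem pres_diamB {S : Finset ℕ} {l : ℕ} {N P : Model} {a c : N.U} {b : P.U}
    (h : PresD S l ⟨N, a⟩ ⟨P, b⟩) (hc : N.relDiam a c) :
    ∃ d, P.relDiam b d ∧ Pres S l ⟨N, c⟩ ⟨P, d⟩ := by
  obtain ⟨d, hd, hm⟩ := h _
    (DS_sInter S l (T := {X | X ∈ DS S l ∧ (⟨N, c⟩ : PMod) ∈ X}) fun X hX => hX.1)
    ⟨c, hc, fun X hX => hX.2⟩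
  exact ⟨d, hd, fun X hX hcX => hm X ⟨hX, hcX⟩⟩

/-- Lift a length-indexed relation on points to tuples. -/
def tupRel (N P : Model) (Q : ℕ → PMod → PMod → Prop) (as : List N.U) (bs : List P.U) : Prop :=
  ∃ as0 a bs0 b, as = as0 ++ [a] ∧ bs = bs0 ++ [b] ∧ as0.length = bs0.length ∧
    Q as0.length ⟨N, a⟩ ⟨P, b⟩

theorem tupRel_iff {N P : Model} {Q : ℕ → PMod → PMod → Prop} {as : List N.U} {bs : List P.U}
    {a : N.U} {b : P.U} : tupRel N P Q (as ++ [a]) (bs ++ [b]) ↔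
      as.length = bs.length ∧ Q as.length ⟨N, a⟩ ⟨P, b⟩ := by
  constructor
  · rintro ⟨as0, a0, bs0, b0, h1, h2, h3, h4⟩
    obtain ⟨e1, e2⟩ := List.append_inj' h1 rfl
    obtain ⟨e3, e4⟩ := List.append_inj' h2 rfl
    have e5 : a = a0 := by simpa using e2
    have e6 : b = b0 := by simpa using e4
    subst e1 e3 e5 e6
    exact ⟨h3, h4⟩
  · rintro ⟨h3, h4⟩
    exact ⟨as, a, bs, b, rfl, rfl, h3, h4⟩

theorem tupRel_iff2 {N P : Model} {Q : ℕ → PMod → PMod → Prop} {as : List N.U} {bs : List P.U}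
    {a c : N.U} {b d : P.U} : tupRel N P Q (as ++ [a, c]) (bs ++ [b, d]) ↔
      as.length = bs.length ∧ Q (as.length + 1) ⟨N, c⟩ ⟨P, d⟩ := by
  have := tupRel_iff (N := N) (P := P) (Q := Q) (as := as ++ [a]) (bs := bs ++ [b])
    (a := c) (b := d)
  simpa using this

theorem tupRel_iff3 {N P : Model} {Q : ℕ → PMod → PMod → Prop} {as : List N.U} {bs : List P.U}
    {a c e : N.U} {b d f : P.U} : tupRel N P Q (as ++ [a, c, e]) (bs ++ [b, d, f]) ↔
      as.length = bs.length ∧ Q (as.length + 2) ⟨N, e⟩ ⟨P, f⟩ := by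
  have := tupRel_iff (N := N) (P := P) (Q := Q) (as := as ++ [a, c]) (bs := bs ++ [b, d])
    (a := e) (b := f)
  simpa using this

theorem tupRel_type (N P : Model) (Q : ℕ → PMod → PMod → Prop) :
    TypeCond N P (tupRel N P Q) := by
  rintro as bs ⟨as0, a, bs0, b, rfl, rfl, h3, -⟩
  simp [h3]

/-- The relation `A` of the canonical k-asimulation. -/
def RA (S : Finset ℕ) (k : ℕ) (N P : Model) : List N.U → List P.U → Prop :=
  tupRel N P (fun m => Pres S (k - m))

/-- The relation `B` of the canonical k-asimulation. -/
def RB (S : Finset ℕ) (k : ℕ) (N P : Model) : List N.U → List P.U → Prop :=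
  tupRel N P (fun m => PresD S (k - m - 1))

theorem RA_base (S : Finset ℕ) (k : ℕ) (N P : Model) : BaseCond N P (S : Set ℕ) (RA S k N P) := by
  intro as bs a b h n hn ha
  exact (tupRel_iff.1 h).2 _ (DS_prop S _ n hn) ha

theorem RA_step (S : Finset ℕ) (k : ℕ) (N P : Model) :
    StepCond N P k (RA S k N P) (RA S k P N) := by
  intro as bs a b d h hd hk
  obtain ⟨hl, h⟩ := tupRel_iff.1 h
  obtain ⟨l, rfl⟩ := Nat.exists_eq_add_of_lt hk
  have e1 : as.length + l + 1 - as.length = l + 1 := by omega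
  have e2 : as.length + l + 1 - (as.length + 1) = l := by omega
  rw [e1] at h
  obtain ⟨c, hc, h1, h2⟩ := pres_step h hd
  refine ⟨c, hc, tupRel_iff2.2 ⟨hl, ?_⟩, tupRel_iff2.2 ⟨hl.symm, ?_⟩⟩
  · rw [e2]; exact h1
  · rw [← hl, e2]; exact h2

theorem RA_box (S : Finset ℕ) (k : ℕ) (N P : Model) : Box2Cond N P k (RA S k N P) := by
  intro as bs a b d f h hd hf hk
  obtain ⟨hl, h⟩ := tupRel_iff.1 h
  obtain ⟨l, rfl⟩ := Nat.exists_eq_add_of_lt hk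
  have e1 : as.length + 1 + l + 1 - as.length = l + 1 + 1 := by omega
  have e2 : as.length + 1 + l + 1 - (as.length + 2) = l := by omega
  rw [e1] at h
  obtain ⟨c, e, hc, he, h1⟩ := pres_box (l := l) (fun X hX => h X (DS_succ S _ hX)) hd hf
  refine ⟨c, e, hc, he, tupRel_iff3.2 ⟨hl, ?_⟩⟩
  rw [e2]; exact h1

theorem RA_diamA (S : Finset ℕ) (k : ℕ) (N P : Model) :
    Diam2aCond N P k (RA S k N P) (RB S k N P) := by
  intro as bs a b d h hd hk
  obtain ⟨hl, h⟩ := tupRel_iff.1 h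
  obtain ⟨l, rfl⟩ := Nat.exists_eq_add_of_lt hk
  have e1 : as.length + 1 + l + 1 - as.length = l + 1 + 1 := by omega
  have e2 : as.length + 1 + l + 1 - (as.length + 1) - 1 = l := by omega
  rw [e1] at h
  obtain ⟨c, hc, h1⟩ := pres_diamA (l := l) (fun X hX => h X (DS_succ S _ hX)) hd
  refine ⟨c, hc, tupRel_iff2.2 ⟨hl, ?_⟩⟩
  rw [e2]; exact h1

theorem RB_diamB (S : Finset ℕ) (k : ℕ) (N P : Model) :
    Diam2bCond N P k (RB S k N P) (RA S k N P) := by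
  intro as bs a c b h hc hk
  obtain ⟨hl, h⟩ := tupRel_iff.1 h
  obtain ⟨d, hd, h1⟩ := pres_diamB h hc
  exact ⟨d, hd, tupRel_iff2.2 ⟨hl, h1⟩⟩

theorem canonical_asim (S : Finset ℕ) (k : ℕ) (N P : Model) (t : N.U) (u : P.U)
    (h : Pres S k ⟨N, t⟩ ⟨P, u⟩) :
    IsKAsimD2 false (S : Set ℕ) N P t u k (RA S k N P) (RA S k P N) (RB S k N P) (RB S k P N) := by
  refine ⟨tupRel_type _ _ _, tupRel_type _ _ _, tupRel_type _ _ _, tupRel_type _ _ _, ?_,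
    RA_base _ _ _ _, RA_base _ _ _ _, RA_step _ _ _ _, RA_step _ _ _ _, ?_,
    RA_diamA _ _ _ _, RA_diamA _ _ _ _, RB_diamB _ _ _ _, RB_diamB _ _ _ _⟩
  · exact ⟨[], t, [], u, rfl, rfl, rfl, h⟩
  · simpa using And.intro (RA_box S k N P) (RA_box S k P N)

theorem sat_congr (M : Model) (φ : FOForm) : ∀ α β : ℕ → M.U,
    (∀ v ∈ φ.freeVars, α v = β v) → (Sat M φ α ↔ Sat M φ β) := by
  induction φ with
  | falsum => intro α β _; rfl
  | pred n v => intro α β h; simp [Sat, h v (by simp [FOForm.freeVars])]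
  | rel s v w =>
    intro α β h
    simp [Sat, h v (by simp [FOForm.freeVars]), h w (by simp [FOForm.freeVars])]
  | conj f g ihf ihg =>
    intro α β h
    exact and_congr (ihf α β fun v hv => h v (by simp [FOForm.freeVars, hv]))
      (ihg α β fun v hv => h v (by simp [FOForm.freeVars, hv]))
  | disj f g ihf ihg =>
    intro α β h
    exact or_congr (ihf α β fun v hv => h v (by simp [FOForm.freeVars, hv]))
      (ihg α β fun v hv => h v (by simp [FOForm.freeVars, hv]))
  | impl f g ihf ihg =>
    intro α β h
    exact imp_congr (ihf α β fun v hv => h v (by simp [FOForm.freeVars, hv]))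
      (ihg α β fun v hv => h v (by simp [FOForm.freeVars, hv]))
  | all w f ih =>
    intro α β h
    refine forall_congr' fun u => ih _ _ fun v hv => ?_
    by_cases hvw : v = w
    · subst hvw; simp
    · simp [hvw, h v (by simp [FOForm.freeVars, hv, hvw])]
  | ex w f ih =>
    intro α β h
    refine exists_congr fun u => ih _ _ fun v hv => ?_
    by_cases hvw : v = w
    · subst hvw; simp
    · simp [hvw, h v (by simp [FOForm.freeVars, hv, hvw])]

/-- **Key Lemma 2 (case (2,2)).**  If k = r(φ(x)) and φ(x) is invariant with
respect to (2,2)-modal k-asimulations, then φ(x) is logically equivalent to a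
(2,2)-standard x-translation of a modal intuitionistic formula. -/
theorem statement_12 (φ : FOForm) (x : ℕ) (hfv : φ.freeVars ⊆ {x})
    (h : KInvariantD2 false x φ φ.degree) :
    ∃ I : MForm, Equiv φ (ST false false I x) := by
  set S := φ.predLetters with hS
  set k := φ.degree with hk
  let F : Set PMod := {p | SatAt p.1 p.2 x φ}
  have hpres : ∀ p q : PMod, Pres S k p q → p ∈ F → q ∈ F := by
    rintro ⟨N, a⟩ ⟨P, b⟩ hp hF
    have hA := canonical_asim S k N P a b hp
    exact h (S : Set ℕ) subset_rfl N P a b _ _ _ _ hA a b hA.2.2.2.2.1 hF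
  have hFD : F ∈ DS S k := by
    have hU := DS_sUnion S k (T := {Y | ∃ p ∈ F, Y = ⋂₀ {X | X ∈ DS S k ∧ p ∈ X}}) (by
      rintro Y ⟨p, -, rfl⟩
      exact DS_sInter S k fun X hX => hX.1)
    convert hU using 1
    ext q
    constructor
    · intro hq
      exact ⟨_, ⟨q, hq, rfl⟩, fun X hX => hX.2⟩
    · rintro ⟨_, ⟨p, hp, rfl⟩, hq⟩
      exact hpres p q (fun X hX hpX => hq X ⟨hX, hpX⟩) hp
  obtain ⟨I, hI⟩ := DS_expr S k hFD
  refine ⟨I, fun M α => ?_⟩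
  rw [hI]
  constructor
  · intro hs β hβ
    refine (sat_congr M φ α β fun v hv => ?_).1 hs
    have hvx := Finset.mem_singleton.1 (hfv hv)
    subst hvx
    exact hβ.symm
  · intro hs
    exact hs α rfl

end ModalIntAsim
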